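/- For all (x, y) ∈ ℝ², the principal value P∫_ℝ e^{i x u} e^{−i y/u} u^{−1} du exists and equals 2πi·((sgn(x) − sgn(y))/2)·J₀(2√|xy|). Moreover the uniform bound |∫_{I_{R,r}} e^{i x u} e^{−i y/u} u^{−1} du| ≤ 4π holds for all 0 < r < R and all x, y ∈ ℝ. -/

import Mathlib

open MeasureTheory Filter

/-- The 0-th Bessel function of the first kind. -/
noncomputable def J0 (z : ℝ) : ℝ :=
  ∑' n : ℕ, (-1 : ℝ) ^ n * (z / 2) ^ (2 * n) / ((Nat.factorial n : ℝ)) ^ 2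

/-- The symmetric truncated domain `I_{R,r} = [-R,-r] ∪ [r,R]`. -/
def pvSet (R r : ℝ) : Set ℝ := Set.Icc (-R) (-r) ∪ Set.Icc r R

/-!
Write `A (ρ)` for the integral of `e^{ixz} e^{-iy/z}` in the angle along the upper half-circle
`|z| = ρ`. Cauchy's theorem in a half-annulus turns the truncated integral into
`I * (A (r) - A (R))`. On the upper half-circle the integrand has modulus
`exp (-(x + y / ρ²) Im z)`, so that either `A` or its reflection `z ↦ -z`, which replaces `(x, y)`
by `(-x, -y)`, is at most `π`. The sum of the two is an integral over the full circle, equal to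
`2 π ∑ (x y) ^ n / n! ^ 2` for every `ρ`. Together these give the uniform bound and the limit of
`A (R)` as `R → ∞`; the substitution `z ↦ -z⁻¹`, which exchanges `x` with `y` and `ρ` with `ρ⁻¹`,
then gives the limit at `0`.
-/

section

open Complex Metric Set Topology
open scoped Interval Nat Real

variable {E : Type*} [NormedAddCommGroup E]

section RealSpace

variable [NormedSpace ℝ E]

lemma setIntegral_pvSet_eq_add {f : ℝ → E} {R r : ℝ} (hr : 0 < r) (hR : r ≤ R)
    (hf : IntegrableOn f (pvSet R r)) :
    ∫ u in pvSet R r, f u = (∫ u in r..R, f u) + ∫ u in r..R, f (-u) := by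
  have hdisj : Disjoint (Icc (-R) (-r)) (Icc r R) :=
    Set.disjoint_left.2 fun u hu hu' => by linarith [hu.2, hu'.1]
  rw [pvSet, setIntegral_union hdisj measurableSet_Icc (hf.mono_set subset_union_left)
    (hf.mono_set subset_union_right), intervalIntegral.integral_comp_neg,
    intervalIntegral.integral_of_le hR, intervalIntegral.integral_of_le (neg_le_neg hR),
    integral_Icc_eq_integral_Ioc, integral_Icc_eq_integral_Ioc, add_comm]

lemma integral_inv_smul_eq_integral_comp_exp (f : ℝ → E) (a b : ℝ) :
    ∫ u in Real.exp a..Real.exp b, u⁻¹ • f u = ∫ t in a..b, f (Real.exp t) := by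
  rw [← intervalIntegral.integral_deriv_smul_comp_of_deriv_nonneg (f' := Real.exp)
    Real.continuous_exp.continuousOn (fun t _ => Real.hasDerivAt_exp t)
    fun t _ => (Real.exp_pos t).le]
  simp [smul_smul, (Real.exp_pos _).ne']

lemma hasSum_circleAverage {ι : Type*} [Countable ι] {F : ι → ℂ → E} {f : ℂ → E}
    {bound : ι → ℝ} {c : ℂ} {R : ℝ}
    (hF : ∀ i, CircleIntegrable (F i) c R)
    (hbound : ∀ i, ∀ z ∈ sphere c |R|, ‖F i z‖ ≤ bound i) (hsum : Summable bound)
    (hf : ∀ z ∈ sphere c |R|, HasSum (fun i => F i z) (f z)) :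
    HasSum (fun i => Real.circleAverage (F i) c R) (Real.circleAverage f c R) :=
  (intervalIntegral.hasSum_integral_of_dominated_convergence (fun i _ => bound i)
    (fun i => (hF i).def'.aestronglyMeasurable)
    (fun i => .of_forall fun θ _ => hbound i _ (circleMap_mem_sphere' c R θ))
    (.of_forall fun _ _ => hsum) (by simp)
    (.of_forall fun θ _ => hf _ (circleMap_mem_sphere' c R θ))).const_smul _

end RealSpace

section ComplexSpace

variable [NormedSpace ℂ E]

/-- The integral of `g` in the angular variable, against `dθ = dz / (i z)`, along the half-circle of
radius `r` about `0` in the upper half-plane. -/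
noncomputable def upperArcIntegral (g : ℂ → E) (r : ℝ) : E :=
  ∫ θ in 0..π, g (circleMap 0 r θ)

-- In the coordinate `w = log z` the sector is a rectangle and `z⁻¹ dz = dw`.
lemma integral_rays_sub_eq_integral_arcs_sub {g : ℂ → E} (hg : DifferentiableOn ℂ g {0}ᶜ)
    {r R : ℝ} (hr : 0 < r) (hR : 0 < R) (α β : ℝ) :
    (∫ u in r..R, u⁻¹ • g (circleMap 0 u α)) - (∫ u in r..R, u⁻¹ • g (circleMap 0 u β)) =
      I • ((∫ θ in α..β, g (circleMap 0 r θ)) - ∫ θ in α..β, g (circleMap 0 R θ)) := by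
  obtain ⟨a, rfl⟩ : ∃ a, Real.exp a = r := ⟨_, Real.exp_log hr⟩
  obtain ⟨b, rfl⟩ : ∃ b, Real.exp b = R := ⟨_, Real.exp_log hR⟩
  have hpolar (t θ : ℝ) : circleMap 0 (Real.exp t) θ = exp (t + θ * I) := by
    simp [circleMap, Complex.exp_add]
  have hdiff : Differentiable ℂ fun w => g (exp w) := fun w =>
    (hg.differentiableAt (isOpen_compl_singleton.mem_nhds (exp_ne_zero w))).comp w
      differentiableAt_exp
  have hrect := integral_boundary_rect_eq_zero_of_differentiableOn (fun w => g (exp w))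
    ⟨a, α⟩ ⟨b, β⟩ hdiff.differentiableOn
  simp only [integral_inv_smul_eq_integral_comp_exp (fun u => g (circleMap 0 u _)), hpolar]
  rw [smul_sub, ← sub_eq_zero, ← hrect]
  abel

lemma setIntegral_pvSet_inv_smul {g : ℂ → E} (hg : DifferentiableOn ℂ g {0}ᶜ) {R r : ℝ}
    (hr : 0 < r) (hR : r ≤ R) :
    ∫ u in pvSet R r, u⁻¹ • g u = I • (upperArcIntegral g r - upperArcIntegral g R) := by
  have hne : ∀ u ∈ pvSet R r, u ≠ 0 := by
    rintro u (hu | hu)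
    · exact (hu.2.trans_lt (neg_neg_of_pos hr)).ne
    · exact (hr.trans_le hu.1).ne'
  have hcont : ContinuousOn (fun u : ℝ => u⁻¹ • g u) (pvSet R r) :=
    (continuousOn_inv₀.mono hne).smul <| hg.continuousOn.comp continuous_ofReal.continuousOn
      fun u hu => by simpa using hne u hu
  rw [setIntegral_pvSet_eq_add hr hR
    (hcont.integrableOn_compact (isCompact_Icc.union isCompact_Icc)), upperArcIntegral,
    upperArcIntegral, ← integral_rays_sub_eq_integral_arcs_sub hg hr (hr.trans_le hR) 0 π]
  simp [circleMap, sub_eq_add_neg, inv_neg]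

lemma upperArcIntegral_add_comp_neg {g : ℂ → E} {r : ℝ} (hg : CircleIntegrable g 0 r) :
    upperArcIntegral g r + upperArcIntegral (fun z => g (-z)) r =
      (2 * π) • Real.circleAverage g 0 r := by
  have hneg (θ : ℝ) : -circleMap 0 r θ = circleMap 0 r (θ + π) := by
    simp [circleMap, add_mul, Complex.exp_add]
  have hsub {a b : ℝ} (ha : a ∈ Icc 0 (2 * π)) (hb : b ∈ Icc 0 (2 * π)) :
      IntervalIntegrable (fun θ => g (circleMap 0 r θ)) volume a b :=
    hg.mono_set <| by
      rw [uIcc_of_le Real.two_pi_pos.le]; exact uIcc_subset_Icc ha hb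
  have hpi : π ∈ Icc 0 (2 * π) := ⟨Real.pi_pos.le, by linarith [Real.pi_pos]⟩
  simp only [upperArcIntegral, hneg]
  rw [intervalIntegral.integral_comp_add_right fun θ => g (circleMap 0 r θ), zero_add, ← two_mul,
    intervalIntegral.integral_add_adjacent_intervals
      (hsub (left_mem_Icc.2 Real.two_pi_pos.le) hpi)
      (hsub hpi (right_mem_Icc.2 Real.two_pi_pos.le)),
    Real.circleAverage, smul_inv_smul₀ Real.two_pi_pos.ne']

lemma upperArcIntegral_comp_neg_inv (g : ℂ → E) (r : ℝ) :
    upperArcIntegral (fun z => g (-z⁻¹)) r = upperArcIntegral g r⁻¹ := by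
  have hinv (θ : ℝ) : -(circleMap 0 r θ)⁻¹ = circleMap 0 r⁻¹ (π - θ) := by
    rw [circleMap_zero_inv]
    simp [circleMap, sub_eq_add_neg, add_mul, Complex.exp_add]
  simp only [upperArcIntegral, hinv]
  simpa using intervalIntegral.integral_comp_sub_left (fun θ => g (circleMap 0 r⁻¹ θ)) π
    (a := 0) (b := π)

lemma circleAverage_inv_pow_smul [CompleteSpace E] {f : ℂ → E} {c : ℂ} {R : ℝ} (hR : 0 < R)
    (hf : DiffContOnCl ℂ f (ball c R)) (n : ℕ) :
    Real.circleAverage (fun z => ((z - c) ^ n)⁻¹ • f z) c R =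
      (n ! : ℂ)⁻¹ • iteratedDeriv n f c := by
  have hcauchy := hf.circleIntegral_one_div_sub_center_pow_smul hR n
  rw [Real.circleAverage_eq_circleIntegral hR.ne']
  simp only [smul_smul, ← mul_inv, ← pow_succ', ← one_div ((_ - c) ^ (n + 1))]
  rw [hcauchy, smul_smul, ← mul_div_assoc, inv_mul_cancel₀ two_pi_I_ne_zero, one_div]

-- Expand the exponential in powers of `(z - c)⁻¹` and average term by term.
lemma hasSum_circleAverage_exp_div_smul [CompleteSpace E] {f : ℂ → E} {c : ℂ} {R : ℝ} (hR : 0 < R)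
    (hf : DiffContOnCl ℂ f (ball c R)) (b : ℂ) :
    HasSum (fun n : ℕ => (b ^ n / (n ! : ℂ) ^ 2) • iteratedDeriv n f c)
      (Real.circleAverage (fun z => exp (b / (z - c)) • f z) c R) := by
  have hcont : ContinuousOn f (sphere c |R|) := by
    rw [abs_of_pos hR]
    exact hf.continuousOn_ball.mono sphere_subset_closedBall
  obtain ⟨C, hC⟩ := (isCompact_sphere c |R|).exists_bound_of_continuousOn hcont
  have hterm (n : ℕ) :
      Real.circleAverage (fun z => (b ^ n / (n ! : ℂ)) • ((z - c) ^ n)⁻¹ • f z) c R =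
        (b ^ n / (n ! : ℂ) ^ 2) • iteratedDeriv n f c := by
    rw [Real.circleAverage_fun_smul, circleAverage_inv_pow_smul hR hf, smul_smul,
      ← div_eq_mul_inv, div_div, ← sq]
  simp only [← hterm]
  refine hasSum_circleAverage (bound := fun n => (‖b‖ / R) ^ n / (n ! : ℝ) * C) (fun n => ?_)
    (fun n z hz => ?_) ((Real.summable_pow_div_factorial _).mul_right C) fun z _ => ?_
  · have hpow : ∀ z ∈ sphere c |R|, (z - c) ^ n ≠ 0 := fun z hz =>
      pow_ne_zero n (sub_ne_zero.2 (ne_of_mem_sphere hz (abs_pos.2 hR.ne').ne'))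
    exact ContinuousOn.circleIntegrable' (by fun_prop (disch := assumption))
  · have hz' : ‖z - c‖ = R := by simpa [abs_of_pos hR] using mem_sphere_iff_norm.1 hz
    rw [smul_smul, norm_smul]
    gcongr
    · simp [hz', mul_pow, div_eq_mul_inv, mul_right_comm]
    · exact hC z hz
  · have hexp := NormedSpace.expSeries_div_hasSum_exp (b / (z - c))
    rw [← exp_eq_exp_ℂ] at hexp
    refine (hexp.smul_const (f z)).congr_fun fun n => ?_
    rw [smul_smul, div_pow, div_right_comm, div_eq_mul_inv _ ((z - c) ^ n)]

end ComplexSpace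

/-- The Bessel–Clifford function of order zero, the entire function with
`J₀ (z) = besselClifford (-(z / 2) ^ 2)`. -/
noncomputable def besselClifford (t : ℂ) : ℂ :=
  ∑' n : ℕ, t ^ n / (n ! : ℂ) ^ 2

lemma besselClifford_zero : besselClifford 0 = 1 := by
  rw [besselClifford]
  exact (tsum_eq_single 0 fun n hn => by simp [hn]).trans (by simp)

lemma ofReal_J0 (z : ℝ) : (J0 z : ℂ) = besselClifford (-(z / 2) ^ 2) := by
  rw [J0, besselClifford, ofReal_tsum]
  refine tsum_congr fun n => ?_
  push_cast
  rw [neg_pow (((z : ℂ) / 2) ^ 2), pow_mul]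

/-- The oscillating factor `e^{ixz} e^{-iy/z}`, with complex parameters and a complex variable; at
`z = 0` it takes the junk value `1`. -/
noncomputable def waveExp (x y z : ℂ) : ℂ :=
  exp (I * x * z) * exp (-I * y / z)

lemma waveExp_neg (x y z : ℂ) : waveExp x y (-z) = waveExp (-x) (-y) z := by
  simp [waveExp, div_neg, neg_div]

lemma waveExp_neg_inv (x y z : ℂ) : waveExp x y (-z⁻¹) = waveExp y x z := by
  rw [waveExp, waveExp, mul_comm]
  congr 2 <;> simp [div_eq_mul_inv]

lemma differentiableOn_waveExp (x y : ℂ) : DifferentiableOn ℂ (waveExp x y) {0}ᶜ := by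
  unfold waveExp
  fun_prop (disch := simp)

lemma continuous_waveExp_circleMap (x y : ℂ) {r : ℝ} (hr : r ≠ 0) :
    Continuous fun θ => waveExp x y (circleMap 0 r θ) :=
  (differentiableOn_waveExp x y).continuousOn.comp_continuous (continuous_circleMap 0 r)
    fun _ => circleMap_ne_center hr

lemma norm_waveExp (x y : ℝ) (z : ℂ) :
    ‖waveExp x y z‖ = Real.exp (-((x + y / ‖z‖ ^ 2) * z.im)) := by
  rw [waveExp, ← Complex.exp_add, norm_exp, ← normSq_eq_norm_sq]
  congr 1
  simp [div_eq_mul_inv]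
  ring

lemma norm_waveExp_le_one {x y : ℝ} {z : ℂ} (hxy : 0 ≤ x + y / ‖z‖ ^ 2) (hz : 0 ≤ z.im) :
    ‖waveExp x y z‖ ≤ 1 := by
  rw [norm_waveExp, Real.exp_le_one_iff, neg_nonpos]
  exact mul_nonneg hxy hz

lemma circleAverage_waveExp (x y : ℂ) {r : ℝ} (hr : 0 < r) :
    Real.circleAverage (waveExp x y) 0 r = besselClifford (x * y) := by
  have hexp : Differentiable ℂ fun z => exp (I * x * z) := by fun_prop
  have hsum := hasSum_circleAverage_exp_div_smul hr (hexp.diffContOnCl (s := ball 0 r)) (-I * y)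
  have hterm (n : ℕ) : ((-I * y) ^ n / (n ! : ℂ) ^ 2) •
      iteratedDeriv n (fun z => exp (I * x * z)) 0 = (x * y) ^ n / (n ! : ℂ) ^ 2 := by
    simp only [iteratedDeriv_cexp_const_mul, mul_zero, Complex.exp_zero, mul_one, smul_eq_mul,
      div_mul_eq_mul_div, ← mul_pow]
    congr 2
    linear_combination (-x * y) * I_mul_I
  simp only [hterm, sub_zero, smul_eq_mul, mul_comm (exp (_ / _))] at hsum
  exact hsum.tsum_eq.symm

lemma norm_besselClifford_le_one {t : ℝ} (ht : t ≤ 0) : ‖besselClifford t‖ ≤ 1 := by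
  have hsq : (√(-t) : ℂ) * (-√(-t) : ℝ) = t := by
    exact_mod_cast show √(-t) * -√(-t) = t by linarith [Real.mul_self_sqrt (neg_nonneg.2 ht)]
  rw [← hsq, ← circleAverage_waveExp _ _ one_pos, Real.circleAverage_eq_circleIntegral one_ne_zero]
  refine (circleIntegral.norm_two_pi_i_inv_smul_integral_le_of_norm_le_const zero_le_one
    fun z hz => ?_).trans_eq (one_mul 1)
  have hz' : ‖z‖ = 1 := by simpa using hz
  rw [norm_smul, norm_waveExp]
  simp [hz']

lemma upperArcIntegral_waveExp_add_neg (x y : ℂ) {r : ℝ} (hr : 0 < r) :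
    upperArcIntegral (waveExp x y) r + upperArcIntegral (waveExp (-x) (-y)) r =
      2 * π * besselClifford (x * y) := by
  have h := upperArcIntegral_add_comp_neg
    ((continuous_waveExp_circleMap x y hr.ne').intervalIntegrable 0 (2 * π))
  simpa [waveExp_neg, circleAverage_waveExp x y hr, real_smul] using h

lemma upperArcIntegral_waveExp_inv (x y : ℂ) (r : ℝ) :
    upperArcIntegral (waveExp x y) r⁻¹ = upperArcIntegral (waveExp y x) r := by
  simp only [← upperArcIntegral_comp_neg_inv, waveExp_neg_inv]

lemma norm_waveExp_circleMap_le_one {x y r θ : ℝ} (hr : 0 ≤ r) (hxy : 0 ≤ x + y / r ^ 2)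
    (hθ : θ ∈ Ι 0 π) : ‖waveExp x y (circleMap 0 r θ)‖ ≤ 1 := by
  rw [uIoc_of_le Real.pi_pos.le] at hθ
  refine norm_waveExp_le_one (by simpa using hxy) ?_
  rw [circleMap_zero_im]
  exact mul_nonneg hr (Real.sin_nonneg_of_nonneg_of_le_pi hθ.1.le hθ.2)

lemma norm_upperArcIntegral_waveExp_le {x y r : ℝ} (hr : 0 ≤ r) (hxy : 0 ≤ x + y / r ^ 2) :
    ‖upperArcIntegral (waveExp x y) r‖ ≤ π := by
  have h := intervalIntegral.norm_integral_le_of_norm_le_const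
    fun θ hθ => norm_waveExp_circleMap_le_one hr hxy hθ
  simpa [upperArcIntegral, abs_of_pos Real.pi_pos] using h

lemma norm_upperArcIntegral_waveExp_sub_le_two_pi {x y r : ℝ} (hxy : x * y ≤ 0) (hr : 0 < r) :
    ‖upperArcIntegral (waveExp x y) r - π * besselClifford (x * y)‖ ≤ 2 * π := by
  have hreflect := upperArcIntegral_waveExp_add_neg x y hr
  have hmid : ‖π * besselClifford (x * y)‖ ≤ π := by
    rw [norm_mul, norm_real, Real.norm_of_nonneg Real.pi_pos.le, ← ofReal_mul]
    exact mul_le_of_le_one_right Real.pi_pos.le (norm_besselClifford_le_one hxy)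
  rcases le_total 0 (x + y / r ^ 2) with h | h
  · linarith [norm_sub_le (upperArcIntegral (waveExp x y) r) (π * besselClifford (x * y)),
      norm_upperArcIntegral_waveExp_le hr.le h]
  · have hneg : ‖upperArcIntegral (waveExp (-x) (-y)) r‖ ≤ π := by
      have := norm_upperArcIntegral_waveExp_le (x := -x) (y := -y) hr.le
        (by rw [neg_div]; linarith)
      simpa using this
    rw [show upperArcIntegral (waveExp x y) r - π * besselClifford (x * y) =
      π * besselClifford (x * y) - upperArcIntegral (waveExp (-x) (-y)) r by
        linear_combination hreflect]
    linarith [norm_sub_le (π * besselClifford (x * y)) (upperArcIntegral (waveExp (-x) (-y)) r)]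

lemma norm_upperArcIntegral_waveExp_sub_le (x y : ℝ) {r R : ℝ} (hr : 0 < r) (hR : 0 < R) :
    ‖upperArcIntegral (waveExp x y) r - upperArcIntegral (waveExp x y) R‖ ≤ 4 * π := by
  have hnonneg {x y : ℝ} (hx : 0 ≤ x) (hy : 0 ≤ y) :
      ‖upperArcIntegral (waveExp x y) r - upperArcIntegral (waveExp x y) R‖ ≤ 4 * π := by
    linarith [norm_sub_le (upperArcIntegral (waveExp x y) r) (upperArcIntegral (waveExp x y) R),
      norm_upperArcIntegral_waveExp_le (x := x) (y := y) hr.le (by positivity),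
      norm_upperArcIntegral_waveExp_le (x := x) (y := y) hR.le (by positivity), Real.pi_pos]
  rcases le_or_gt (x * y) 0 with hxy | hxy
  · linarith [norm_sub_le_norm_sub_add_norm_sub (upperArcIntegral (waveExp x y) r)
      (π * besselClifford (x * y)) (upperArcIntegral (waveExp x y) R),
      norm_sub_rev (upperArcIntegral (waveExp x y) R) (π * besselClifford (x * y)),
      norm_upperArcIntegral_waveExp_sub_le_two_pi hxy hr,
      norm_upperArcIntegral_waveExp_sub_le_two_pi hxy hR]
  rcases mul_pos_iff.1 hxy with ⟨hx, hy⟩ | ⟨hx, hy⟩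
  · exact hnonneg hx.le hy.le
  · have hreflect : upperArcIntegral (waveExp x y) r - upperArcIntegral (waveExp x y) R =
        -(upperArcIntegral (waveExp (-x) (-y)) r - upperArcIntegral (waveExp (-x) (-y)) R) := by
      linear_combination upperArcIntegral_waveExp_add_neg x y hr -
        upperArcIntegral_waveExp_add_neg x y hR
    rw [hreflect, norm_neg]
    simpa using hnonneg (neg_nonneg.2 hx.le) (neg_nonneg.2 hy.le)

lemma tendsto_upperArcIntegral_waveExp_atTop_of_pos {x : ℝ} (hx : 0 < x) (y : ℝ) :
    Tendsto (upperArcIntegral (waveExp x y)) atTop (𝓝 0) := by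
  have hcoef : Tendsto (fun R : ℝ => x + y / R ^ 2) atTop (𝓝 x) := by
    simpa using (tendsto_const_nhds (x := y)).div_atTop (tendsto_pow_atTop two_ne_zero)
      |>.const_add x
  rw [← intervalIntegral.integral_zero (E := ℂ) (μ := volume) (a := 0) (b := π)]
  refine intervalIntegral.tendsto_integral_filter_of_dominated_convergence (fun _ => 1) ?_ ?_
    (by simp) ?_
  · filter_upwards [eventually_ne_atTop 0] with R hR
    exact (continuous_waveExp_circleMap x y hR).aestronglyMeasurable
  · filter_upwards [eventually_ge_atTop 0, hcoef.eventually_const_le hx] with R hR hxy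
    exact .of_forall fun θ hθ => norm_waveExp_circleMap_le_one hR hxy hθ
  · filter_upwards [Measure.ae_ne volume π] with θ hθπ hθ
    rw [uIoc_of_le Real.pi_pos.le] at hθ
    have hsin : 0 < Real.sin θ :=
      Real.sin_pos_of_pos_of_lt_pi hθ.1 (hθ.2.lt_of_ne hθπ)
    rw [tendsto_zero_iff_norm_tendsto_zero]
    simp only [norm_waveExp, circleMap_zero_im, norm_circleMap_zero, sq_abs]
    exact Real.tendsto_exp_neg_atTop_nhds_zero.comp
      (hcoef.pos_mul_atTop hx (tendsto_id.atTop_mul_const hsin))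

lemma tendsto_upperArcIntegral_waveExp_zero_atTop (y : ℂ) :
    Tendsto (upperArcIntegral (waveExp 0 y)) atTop (𝓝 π) := by
  have hcont : Continuous (upperArcIntegral (waveExp y 0)) := by
    refine intervalIntegral.continuous_parametric_intervalIntegral_of_continuous' ?_ 0 π
    unfold waveExp circleMap
    simp only [mul_zero, zero_div]
    fun_prop
  have hzero : upperArcIntegral (waveExp y 0) 0 = π := by
    simp [upperArcIntegral, waveExp]
  have h := (hcont.tendsto 0).comp tendsto_inv_atTop_zero
  simpa only [Function.comp_def, upperArcIntegral_waveExp_inv, hzero] using h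

lemma tendsto_upperArcIntegral_waveExp_atTop (x y : ℝ) :
    Tendsto (upperArcIntegral (waveExp x y)) atTop
      (𝓝 (π * (1 - Real.sign x) * besselClifford (x * y))) := by
  rcases lt_trichotomy x 0 with hx | rfl | hx
  · have h := (tendsto_upperArcIntegral_waveExp_atTop_of_pos (neg_pos.2 hx) (-y)).const_sub
      (2 * π * besselClifford (x * y))
    rw [sub_zero] at h
    rw [Real.sign_of_neg hx, show (π * (1 - (-1 : ℝ)) : ℂ) = 2 * π by push_cast; ring]
    refine h.congr' ?_
    filter_upwards [eventually_gt_atTop 0] with R hR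
    rw [← upperArcIntegral_waveExp_add_neg x y hR, ofReal_neg, ofReal_neg, add_sub_cancel_right]
  · simpa [besselClifford_zero] using tendsto_upperArcIntegral_waveExp_zero_atTop y
  · simpa [Real.sign_of_pos hx] using tendsto_upperArcIntegral_waveExp_atTop_of_pos hx y

lemma tendsto_upperArcIntegral_waveExp_nhdsGT_zero (x y : ℝ) :
    Tendsto (upperArcIntegral (waveExp x y)) (𝓝[>] 0)
      (𝓝 (π * (1 - Real.sign y) * besselClifford (x * y))) := by
  have h := (tendsto_upperArcIntegral_waveExp_atTop y x).comp tendsto_inv_nhdsGT_zero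
  simpa only [Function.comp_def, upperArcIntegral_waveExp_inv, mul_comm (y : ℂ)] using h

-- For `0 < x * y` both sides vanish.
lemma sign_sub_sign_mul_besselClifford (x y : ℝ) :
    ((Real.sign x - Real.sign y : ℝ) : ℂ) * besselClifford (x * y) =
      ((Real.sign x - Real.sign y : ℝ) : ℂ) * J0 (2 * √|x * y|) := by
  rcases le_or_gt (x * y) 0 with hxy | hxy
  · have harg : -((2 * √|x * y| / 2) ^ 2) = x * y := by
      rw [mul_div_cancel_left₀ _ two_ne_zero, Real.sq_sqrt (abs_nonneg _), abs_of_nonpos hxy,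
        neg_neg]
    rw [ofReal_J0]
    congr 2
    exact_mod_cast harg.symm
  · have hsign : Real.sign x = Real.sign y := by
      rcases mul_pos_iff.1 hxy with ⟨hx, hy⟩ | ⟨hx, hy⟩
      · rw [Real.sign_of_pos hx, Real.sign_of_pos hy]
      · rw [Real.sign_of_neg hx, Real.sign_of_neg hy]
    simp [hsign]

lemma setIntegral_pvSet_waveExp (x y : ℂ) {R r : ℝ} (hr : 0 < r) (hR : r ≤ R) :
    ∫ u in pvSet R r, exp (I * x * u) * exp (-I * y / u) / u =
      I * (upperArcIntegral (waveExp x y) r - upperArcIntegral (waveExp x y) R) := by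
  rw [← smul_eq_mul I (_ - _), ← setIntegral_pvSet_inv_smul (differentiableOn_waveExp x y) hr hR]
  simp only [waveExp, real_smul, ofReal_inv, div_eq_inv_mul _ (ofReal _)]

end

/-- for all `(x,y) ∈ ℝ²`, the principal value
`P∫ e^{ixu} e^{-iy/u} u⁻¹ du = 2πi ((sgn x - sgn y)/2) J₀(2√|xy|)`, and the
truncated integrals satisfy the uniform bound `| ∫_{I_{R,r}} | ≤ 4π`. -/
theorem pv_integral_kernel (x y : ℝ) :
    Tendsto (fun Rr : ℝ × ℝ =>
        ∫ u in pvSet Rr.1 Rr.2,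
          Complex.exp (Complex.I * (x : ℂ) * (u : ℂ)) *
            Complex.exp (-Complex.I * (y : ℂ) / (u : ℂ)) / (u : ℂ))
      ((atTop : Filter ℝ) ×ˢ nhdsWithin 0 (Set.Ioi 0))
      (nhds (Complex.I * ((2 * Real.pi * ((Real.sign x - Real.sign y) / 2) *
        J0 (2 * Real.sqrt |x * y|) : ℝ) : ℂ))) ∧
    (∀ R r : ℝ, 0 < r → r < R →
      ‖∫ u in pvSet R r,
          Complex.exp (Complex.I * (x : ℂ) * (u : ℂ)) *
            Complex.exp (-Complex.I * (y : ℂ) / (u : ℂ)) / (u : ℂ)‖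
        ≤ 4 * Real.pi) := by
  refine ⟨?_, fun R r hr hR => ?_⟩
  · have hlim : Complex.I * ((2 * Real.pi * ((Real.sign x - Real.sign y) / 2) *
        J0 (2 * Real.sqrt |x * y|) : ℝ) : ℂ) =
        Complex.I * (Real.pi * (1 - Real.sign y) * besselClifford (x * y) -
          Real.pi * (1 - Real.sign x) * besselClifford (x * y)) := by
      have h := sign_sub_sign_mul_besselClifford x y
      push_cast at h ⊢
      linear_combination -Complex.I * Real.pi * h
    rw [hlim]
    refine ((((tendsto_upperArcIntegral_waveExp_nhdsGT_zero x y).comp tendsto_snd).sub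
      ((tendsto_upperArcIntegral_waveExp_atTop x y).comp tendsto_fst)).const_mul
        Complex.I).congr' ?_
    filter_upwards [(eventually_gt_atTop 1).prod_mk (Ioo_mem_nhdsGT one_pos)]
      with Rr ⟨hR, hr⟩
    exact (setIntegral_pvSet_waveExp x y hr.1 (hr.2.trans hR).le).symm
  · rw [setIntegral_pvSet_waveExp x y hr hR.le, norm_mul, Complex.norm_I, one_mul]
    exact norm_upperArcIntegral_waveExp_sub_le x y hr (hr.trans hR)
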